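/- arXiv:2106.00315 — 8 statements merged into one kernel-verified Lean document; each statement's English description precedes it below -/
import Mathlib

section
/- Let Σ be a finite alphabet, L ⊆ Σ* with ε ∈ L, and let a, b, c be three pairwise distinct symbols not in Σ. Define L'' = {a}·((L·{c})*·L) ∪ {b}·(Σ ∪ {c})* over the alphabet Σ ∪ {a,b,c}. Then for every n ≥ 0: (ac^n)⁻¹L'' = a⁻¹L'' and (bc^n)⁻¹L'' = b⁻¹L''. -/
/-!
Common framework: words over an ordered alphabet, co-lexicographic order,
(partial) DFAs and NFAs, Wheeler automata and Wheeler languages,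
following "Ordering regular languages: a danger zone".
-/

namespace WheelerPaper

/-- Strict co-lexicographic order on words: compare the reverses lexicographically. -/
def Colex {A : Type} [LinearOrder A] (x y : List A) : Prop :=
  List.Lex (· < ·) x.reverse y.reverse

/-- Non-strict co-lexicographic order. -/
def ColexLE {A : Type} [LinearOrder A] (x y : List A) : Prop :=
  Colex x y ∨ x = y

/-- Right context `α⁻¹L` of a word `α` with respect to a language `L`. -/
def rc {A : Type} (L : Set (List A)) (α : List A) : Set (List A) :=
  {γ | α ++ γ ∈ L}

/-- `Pref L`: the set of prefixes of words of `L`. -/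
def Pref {A : Type} (L : Set (List A)) : Set (List A) :=
  {α | ∃ β, α ++ β ∈ L}

/-- `wpow γ i` is `γ^i`, the `i`-fold concatenation of the word `γ`. -/
def wpow {A : Type} (γ : List A) : ℕ → List A
  | 0 => []
  | n + 1 => γ ++ wpow γ n

/-- A DFA with a possibly partial transition function. -/
structure PDFA (A : Type) (Q : Type) where
  init : Q
  trans : Q → A → Option Q
  accept : Q → Prop

/-- Extended (partial) transition function of a `PDFA`. -/
def PDFA.evalFrom {A Q : Type} (M : PDFA A Q) : Q → List A → Option Q
  | q, [] => some q
  | q, a :: w => (M.trans q a).bind fun q' => PDFA.evalFrom M q' w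

/-- The language accepted by a `PDFA`. -/
def PDFA.accepts {A Q : Type} (M : PDFA A Q) : Set (List A) :=
  {w | ∃ q, M.evalFrom M.init w = some q ∧ M.accept q}

/-- A `PDFA` is trim if every state is reachable from the initial state and
every state can reach some accepting state. -/
def PDFA.Trim {A Q : Type} (M : PDFA A Q) : Prop :=
  (∀ q : Q, ∃ α, M.evalFrom M.init α = some q) ∧
  (∀ q : Q, ∃ α q', M.evalFrom q α = some q' ∧ M.accept q')

/-- `r` is a Wheeler order for the DFA `M`: a strict total order on states whose
minimum is the initial state, the initial state has no incoming transitions, and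
the two Wheeler conditions hold. -/
def IsWheelerOrder {A Q : Type} [LinearOrder A] (M : PDFA A Q) (r : Q → Q → Prop) : Prop :=
  IsStrictTotalOrder Q r ∧
  (∀ q : Q, q ≠ M.init → r M.init q) ∧
  (∀ (q : Q) (a : A), M.trans q a ≠ some M.init) ∧
  (∀ (u₁ : Q) (a₁ : A) (v₁ : Q) (u₂ : Q) (a₂ : A) (v₂ : Q),
     M.trans u₁ a₁ = some v₁ → M.trans u₂ a₂ = some v₂ →
     (a₁ < a₂ → r v₁ v₂) ∧ (a₁ = a₂ → r u₁ u₂ → (r v₁ v₂ ∨ v₁ = v₂)))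

/-- A language is Wheeler (w.r.t. the given order on the alphabet) if it is
recognized by some Wheeler DFA. -/
def IsWheelerLang {A : Type} [LinearOrder A] (L : Set (List A)) : Prop :=
  ∃ (n : ℕ) (M : PDFA A (Fin n)) (r : Fin n → Fin n → Prop),
    IsWheelerOrder M r ∧ M.accepts = L

/-- A language is regular if it is recognized by some finite-state (partial) DFA. -/
def IsRegular {A : Type} (L : Set (List A)) : Prop :=
  ∃ (k : ℕ) (M : PDFA A (Fin k)), M.accepts = L

/-- The input-consistent convex refinement `≡^c_L` of the Myhill–Nerode
equivalence: same right context, same last character (or both empty), and every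
word of `Pref L` co-lexicographically between the two words has the same right
context. -/
def EquivC {A : Type} [LinearOrder A] (L : Set (List A)) (α β : List A) : Prop :=
  rc L α = rc L β ∧ α.getLast? = β.getLast? ∧
  ∀ γ ∈ Pref L,
    ((ColexLE α γ ∧ ColexLE γ β) ∨ (ColexLE β γ ∧ ColexLE γ α)) →
    rc L γ = rc L α

/-- An NFA with a single initial state. -/
structure NFA' (A : Type) (Q : Type) where
  init : Q
  trans : Q → A → Set Q
  accept : Q → Prop

/-- One step of an `NFA'` on a set of states. -/
def NFA'.stepSet {A Q : Type} (M : NFA' A Q) (S : Set Q) (a : A) : Set Q :=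
  {q | ∃ p ∈ S, q ∈ M.trans p a}

/-- Extended transition function of an `NFA'` on sets of states. -/
def NFA'.evalFrom {A Q : Type} (M : NFA' A Q) : Set Q → List A → Set Q
  | S, [] => S
  | S, a :: w => NFA'.evalFrom M (M.stepSet S a) w

/-- The language accepted by an `NFA'`. -/
def NFA'.accepts {A Q : Type} (M : NFA' A Q) : Set (List A) :=
  {w | ∃ q ∈ M.evalFrom {M.init} w, M.accept q}

/-- An `NFA'` is trim if every state is reachable from the initial state and
every state can reach some accepting state. -/
def NFA'.Trim {A Q : Type} (M : NFA' A Q) : Prop :=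
  (∀ q : Q, ∃ α, q ∈ M.evalFrom {M.init} α) ∧
  (∀ q : Q, ∃ α, ∃ q' ∈ M.evalFrom {q} α, M.accept q')

/-- `r` is a Wheeler order for the NFA `M`. -/
def IsWheelerNFAOrder {A Q : Type} [LinearOrder A] (M : NFA' A Q) (r : Q → Q → Prop) : Prop :=
  IsStrictTotalOrder Q r ∧
  (∀ q : Q, q ≠ M.init → r M.init q) ∧
  (∀ (q : Q) (a : A), M.init ∉ M.trans q a) ∧
  (∀ (u₁ : Q) (a₁ : A) (v₁ : Q) (u₂ : Q) (a₂ : A) (v₂ : Q),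
     v₁ ∈ M.trans u₁ a₁ → v₂ ∈ M.trans u₂ a₂ →
     (a₁ < a₂ → r v₁ v₂) ∧ (a₁ = a₂ → r u₁ u₂ → (r v₁ v₂ ∨ v₁ = v₂)))

/-- `I` is an interval with respect to the strict order `r`. -/
def IsIntervalRel {Q : Type} (r : Q → Q → Prop) (I : Set Q) : Prop :=
  ∀ x y z : Q, (r x y ∨ x = y) → (r y z ∨ y = z) → x ∈ I → z ∈ I → y ∈ I

/-- The class of star-free languages: built from `∅`, `{ε}` and the singletons
`{a}` by union, concatenation and complement. -/
inductive StarFree {A : Type} : Set (List A) → Prop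
  | empty : StarFree ∅
  | eps : StarFree {[]}
  | single (a : A) : StarFree {[a]}
  | union {L₁ L₂ : Set (List A)} : StarFree L₁ → StarFree L₂ → StarFree (L₁ ∪ L₂)
  | concat {L₁ L₂ : Set (List A)} : StarFree L₁ → StarFree L₂ →
      StarFree {w | ∃ u v, u ∈ L₁ ∧ v ∈ L₂ ∧ w = u ++ v}
  | compl {L : Set (List A)} : StarFree L → StarFree Lᶜ


/-- The language of all words over the sub-alphabet `S`. -/
def wordsOver {A : Type} (S : Set A) : Language A := {w | ∀ x ∈ w, x ∈ S}


section Statement7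

open Computability

/-- in the language `L'' = a·((L·c)*·L) + b·(Σ ∪ {c})*`, the
words `ac^n` and `a` have the same right context, and so do `bc^n` and `b`. -/
theorem statement7 {A : Type} [Fintype A] (S : Set A) (a b c : A)
    (hab : a ≠ b) (hac : a ≠ c) (hbc : b ≠ c)
    (ha : a ∉ S) (hb : b ∉ S) (hc : c ∉ S)
    (L : Language A) (hsub : ∀ w ∈ L, ∀ x ∈ w, x ∈ S) (heps : [] ∈ L)
    (L'' : Language A)
    (hL'' : L'' = {[a]} * ((L * {[c]})∗ * L) + {[b]} * wordsOver (S ∪ {c})) :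
    ∀ n : ℕ,
      rc L'' ([a] ++ List.replicate n c) = rc L'' [a] ∧
      rc L'' ([b] ++ List.replicate n c) = rc L'' [b] := by
  have hM : ∀ w : List A, c :: w ∈ (L * {[c]})∗ * L ↔ w ∈ (L * {[c]})∗ * L := by
    intro w
    have hdec : (L * {[c]})∗ * L = L + L * ({[c]} * ((L * {[c]})∗ * L)) := by
      conv_lhs => rw [← Language.one_add_self_mul_kstar_eq_kstar]
      rw [add_mul, one_mul, mul_assoc, mul_assoc]
    constructor
    · intro h
      rw [hdec, Language.mem_add] at h
      rcases h with h | h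
      · exact absurd (hsub _ h c (by simp)) hc
      · obtain ⟨u, hu, v, hv, huv⟩ := Language.mem_mul.1 h
        obtain ⟨x, hx, m, hm, hxm⟩ := Language.mem_mul.1 hv
        obtain rfl : x = [c] := hx
        subst hxm
        cases u with
        | nil =>
          simp at huv
          exact huv ▸ hm
        | cons y u =>
          simp at huv
          exact absurd (hsub _ hu c (by simp [huv.1])) hc
    · intro h
      rw [hdec, Language.mem_add]
      right
      exact Language.mem_mul.2 ⟨[], heps, c :: w,
        Language.mem_mul.2 ⟨[c], rfl, w, h, rfl⟩, rfl⟩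
  have hcons : ∀ (x : A) (K : Language A) (y : A) (w : List A),
      y :: w ∈ ({[x]} : Language A) * K ↔ y = x ∧ w ∈ K := by
    intro x K y w
    constructor
    · intro h
      obtain ⟨u, hu, v, hv, huv⟩ := Language.mem_mul.1 h
      obtain rfl : u = [x] := hu
      simp at huv
      exact ⟨huv.1.symm, huv.2 ▸ hv⟩
    · rintro ⟨rfl, h⟩
      exact Language.mem_mul.2 ⟨[y], rfl, w, h, rfl⟩
  have hA : ∀ w : List A, a :: w ∈ L'' ↔ w ∈ (L * {[c]})∗ * L := by
    intro w
    rw [hL'', Language.mem_add, hcons, hcons]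
    simp [hab]
  have hB : ∀ w : List A, b :: w ∈ L'' ↔ ∀ x ∈ w, x ∈ S ∪ {c} := by
    intro w
    rw [hL'', Language.mem_add, hcons, hcons]
    simp only [hab.symm, false_and, true_and, false_or]
    rfl
  intro n
  constructor
  · ext w
    change a :: (List.replicate n c ++ w) ∈ L'' ↔ a :: w ∈ L''
    rw [hA, hA]
    induction n with
    | zero => simp
    | succ k ih => rw [List.replicate_succ, List.cons_append, hM, ih]
  · ext w
    change b :: (List.replicate n c ++ w) ∈ L'' ↔ b :: w ∈ L''
    rw [hB, hB]
    induction n with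
    | zero => simp
    | succ k ih =>
      rw [List.replicate_succ, List.cons_append, List.forall_mem_cons, ih]
      simp

end Statement7

end WheelerPaper
end

section
/- Let Σ be a finite alphabet, L ⊆ Σ* with L ≠ Σ* and ε ∈ L, and let a, b, c be three pairwise distinct symbols not in Σ. Define L'' = {a}·((L·{c})*·L) ∪ {b}·(Σ ∪ {c})* over the alphabet Σ ∪ {a,b,c}. Then for all i, j ≥ 0: (ac^i)⁻¹L'' ≠ (bc^j)⁻¹L''. Indeed, for any α ∈ Σ* \ L, the word αc belongs to (bc^j)⁻¹L'' but not to (ac^i)⁻¹L''. -/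
/-!
Common framework: words over an ordered alphabet, co-lexicographic order,
(partial) DFAs and NFAs, Wheeler automata and Wheeler languages,
following "Ordering regular languages: a danger zone".
-/

namespace WheelerPaper

section Statement8

open Computability

theorem split8 {A : Type} (c : A) (u p x y : List A) (hu : c ∉ u) (hp : c ∉ p)
    (h : u ++ c :: x = p ++ c :: y) : u = p ∧ x = y := by
  induction u generalizing p with
  | nil =>
    cases p with
    | nil => simpa using h
    | cons d p => simp_all
  | cons e u ih =>
    cases p with
    | nil => simp at h; simp [h.1] at hu
    | cons d p =>
      simp only [List.cons_append, List.cons.injEq] at h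
      have := ih p (fun hh => hu (by simp [hh])) (fun hh => hp (by simp [hh])) h.2
      simp [h.1, this.1, this.2]

theorem aux8 {A : Type} (S : Set A) (c : A) (hc : c ∉ S)
    (L : Language A) (hsub : ∀ w ∈ L, ∀ x ∈ w, x ∈ S)
    (α : List A) (hα : ∀ x ∈ α, x ∈ S) (hαL : α ∉ L) (v : List A) (hv : v ∈ L)
    (l : List (List A)) :
    (∀ y ∈ l, ∃ u ∈ L, u ++ [c] = y) → ∀ i : ℕ,
      l.flatten ++ v = List.replicate i c ++ (α ++ [c]) → False := by
  induction l with
  | nil =>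
    intro _ i h
    have hcv : c ∈ v := by
      have : v = List.replicate i c ++ (α ++ [c]) := by simpa using h
      rw [this]; simp
    exact hc (hsub v hv c hcv)
  | cons y l ih =>
    intro hl i h
    obtain ⟨u, hu, rfl⟩ := hl y (by simp)
    have hcu : c ∉ u := fun hh => hc (hsub u hu c hh)
    have hcα : c ∉ α := fun hh => hc (hα c hh)
    cases i with
    | zero =>
      have h' : u ++ c :: (l.flatten ++ v) = α ++ c :: [] := by simpa using h
      have := split8 c _ _ _ _ hcu hcα h'
      exact hαL (this.1 ▸ hu)
    | succ i =>
      have h' : u ++ c :: (l.flatten ++ v) = [] ++ c :: (List.replicate i c ++ (α ++ [c])) := by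
        simpa [List.replicate_succ] using h
      have := split8 c _ _ _ _ hcu (by simp) h'
      exact ih (fun y hy => hl y (by simp [hy])) i this.2

/-- if `ε ∈ L ⊊ Σ*` then in
`L'' = a·((L·c)*·L) + b·(Σ ∪ {c})*` the words `ac^i` and `bc^j` have distinct
right contexts, witnessed by `αc` for any `α ∈ Σ* \ L`. -/
theorem statement8 {A : Type} [Fintype A] (S : Set A) (a b c : A)
    (hab : a ≠ b) (hac : a ≠ c) (hbc : b ≠ c)
    (ha : a ∉ S) (hb : b ∉ S) (hc : c ∉ S)
    (L : Language A) (hsub : ∀ w ∈ L, ∀ x ∈ w, x ∈ S) (heps : [] ∈ L)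
    (hne : L ≠ wordsOver S)
    (L'' : Language A)
    (hL'' : L'' = {[a]} * ((L * {[c]})∗ * L) + {[b]} * wordsOver (S ∪ {c})) :
    ∀ i j : ℕ,
      rc L'' ([a] ++ List.replicate i c) ≠ rc L'' ([b] ++ List.replicate j c) ∧
      ∀ α : List A, (∀ x ∈ α, x ∈ S) → α ∉ L →
        (α ++ [c]) ∈ rc L'' ([b] ++ List.replicate j c) ∧
        (α ++ [c]) ∉ rc L'' ([a] ++ List.replicate i c) := by
  intro i j
  have key : ∀ α : List A, (∀ x ∈ α, x ∈ S) → α ∉ L →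
        (α ++ [c]) ∈ rc L'' ([b] ++ List.replicate j c) ∧
        (α ++ [c]) ∉ rc L'' ([a] ++ List.replicate i c) := by
    intro α hα hαL
    subst hL''
    constructor
    · right
      refine Language.mem_mul.2 ⟨[b], rfl, List.replicate j c ++ (α ++ [c]), ?_, by simp⟩
      intro x hx
      simp only [List.mem_append, List.mem_replicate, List.mem_singleton] at hx
      rcases hx with hx | hx | hx
      · exact Or.inr hx.2
      · exact Or.inl (hα x hx)
      · exact Or.inr hx
    · rintro (h | h)
      · obtain ⟨p, hp, q, hq, h⟩ := Language.mem_mul.1 h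
        obtain rfl : p = [a] := hp
        obtain ⟨s, hs, v, hv, rfl⟩ := Language.mem_mul.1 hq
        obtain ⟨l, rfl, hl⟩ := Language.mem_kstar.1 hs
        refine aux8 S c hc L hsub α hα hαL v hv l ?_ i (by simpa using h)
        intro y hy
        obtain ⟨u, hu, w, hw, hy⟩ := Language.mem_mul.1 (hl y hy)
        obtain rfl : w = [c] := hw
        exact ⟨u, hu, hy⟩
      · obtain ⟨p, hp, q, hq, h⟩ := Language.mem_mul.1 h
        obtain rfl : p = [b] := hp
        simp at h
        exact hab h.1.symm
  refine ⟨?_, key⟩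
  intro heq
  apply hne
  ext w
  refine ⟨fun hw => hsub w hw, fun hw => ?_⟩
  by_contra hwL
  obtain ⟨h1, h2⟩ := key w hw hwL
  exact h2 (heq ▸ h1)

end Statement8

end WheelerPaper
end

section
/- Let Σ be a finite alphabet, L ⊆ Σ* a regular language with ε ∈ L, and let a, b, c be three pairwise distinct symbols not in Σ. Let Σ' = Σ ∪ {a,b,c} and L'' = {a}·((L·{c})*·L) ∪ {b}·(Σ ∪ {c})*. Then for every linear order ≺ on Σ' satisfying a ≺ b ≺ c: L = Σ* if and only if L'' is Wheeler with respect to (Σ',≺). -/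
/-!
Common framework: words over an ordered alphabet, co-lexicographic order,
(partial) DFAs and NFAs, Wheeler automata and Wheeler languages,
following "Ordering regular languages: a danger zone".
-/

namespace WheelerPaper

theorem PDFA.evalFrom_append {A Q : Type} (M : PDFA A Q) (u v : List A) (q : Q) :
    M.evalFrom q (u ++ v) = (M.evalFrom q u).bind fun q' => M.evalFrom q' v := by
  induction u generalizing q with
  | nil => rfl
  | cons x u ih =>
    simp only [List.cons_append, PDFA.evalFrom]
    cases h : M.trans q x with
    | none => rfl
    | some q' => simp [ih]

theorem suffix_unique {A : Type} {c : A} {u w x l : List A}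
    (hu : u = [] ∨ ∃ u', u = u' ++ [c]) (hx : x = [] ∨ ∃ x', x = x' ++ [c])
    (hw : c ∉ w) (hl : c ∉ l) (h : u ++ w = x ++ l) : w = l := by
  have key : ∀ {u x as w l : List A}, (x = [] ∨ ∃ x', x = x' ++ [c]) → c ∉ w →
      x = u ++ as → w = as ++ l → w = l := by
    intro u x as w l hx hw h1 h2
    rcases List.eq_nil_or_concat as with rfl | ⟨as', d, rfl⟩
    · simpa using h2
    · exfalso
      rcases hx with rfl | ⟨x', rfl⟩
      · simp at h1
      · have h3 : x' ++ [c] = (u ++ as') ++ [d] := by simpa using h1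
        have h4 := (List.append_inj' h3 rfl).2
        simp at h4
        subst h4
        apply hw
        rw [h2]
        simp
  rcases List.append_eq_append_iff.1 h with ⟨as, h1, h2⟩ | ⟨as, h1, h2⟩
  · exact key hx hw h1 h2
  · exact (key hu hl h1 h2).symm

theorem kstar_end {A : Type} {c : A} {L : Language A} {x : List A}
    (h : x ∈ KStar.kstar (L * {[c]})) : x = [] ∨ ∃ x', x = x' ++ [c] := by
  rw [Language.mem_kstar] at h
  obtain ⟨ls, rfl, hls⟩ := h
  rcases List.eq_nil_or_concat ls with rfl | ⟨ls', d, rfl⟩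
  · left; rfl
  · right
    have hd := hls d (by simp)
    rw [Language.mem_mul] at hd
    obtain ⟨p, hp, q, hq, rfl⟩ := hd
    have hq' : q = [c] := hq
    subst hq'
    exact ⟨ls'.flatten ++ p, by simp⟩

theorem kstar_over {A : Type} {c : A} {S : Set A} {L : Language A}
    (hsub : ∀ w ∈ L, ∀ x ∈ w, x ∈ S) {v : List A}
    (h : v ∈ KStar.kstar (L * {[c]}) * L) : v ∈ wordsOver (S ∪ {c}) := by
  rw [Language.mem_mul] at h
  obtain ⟨x, hx, l, hl, rfl⟩ := h
  rw [Language.mem_kstar] at hx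
  obtain ⟨ls, rfl, hls⟩ := hx
  intro y hy
  rw [List.mem_append, List.mem_flatten] at hy
  rcases hy with ⟨d, hd, hy⟩ | hy
  · have := hls d hd
    rw [Language.mem_mul] at this
    obtain ⟨p, hp, q, hq, rfl⟩ := this
    have hq' : q = [c] := hq
    subst hq'
    rcases List.mem_append.1 hy with hy | hy
    · exact Or.inl (hsub _ hp _ hy)
    · right; simpa using hy
  · exact Or.inl (hsub _ hl _ hy)

theorem over_kstar {A : Type} {c : A} {S : Set A} {v : List A}
    (h : v ∈ wordsOver (S ∪ {c})) :
    v ∈ KStar.kstar (wordsOver S * {[c]}) * wordsOver S := by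
  induction v with
  | nil =>
    exact Language.mem_mul.2 ⟨[], Language.nil_mem_kstar _, [], by intro x hx; simp at hx, rfl⟩
  | cons x v ih =>
    have ih := ih (fun y hy => h y (List.mem_cons_of_mem _ hy))
    obtain ⟨p, hp, l, hl, rfl⟩ := Language.mem_mul.1 ih
    obtain ⟨ls, rfl, hls⟩ := Language.mem_kstar.1 hp
    rcases h x (by simp) with hx | hx
    · cases ls with
      | nil =>
        refine Language.mem_mul.2 ⟨[], Language.nil_mem_kstar _, x :: l, ?_, rfl⟩
        intro y hy
        rcases List.mem_cons.1 hy with rfl | hy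
        · exact hx
        · exact hl y hy
      | cons d ds =>
        refine Language.mem_mul.2 ⟨((x :: d) :: ds).flatten, Language.mem_kstar.2 ⟨_, rfl, ?_⟩,
          l, hl, rfl⟩
        intro y hy
        rcases List.mem_cons.1 hy with rfl | hy
        · obtain ⟨p, hp2, q, hq, rfl⟩ := Language.mem_mul.1 (hls d (by simp))
          refine Language.mem_mul.2 ⟨x :: p, ?_, q, hq, rfl⟩
          intro z hz
          rcases List.mem_cons.1 hz with rfl | hz
          · exact hx
          · exact hp2 z hz
        · exact hls y (List.mem_cons_of_mem _ hy)
    · have hx' : x = c := hx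
      subst hx'
      refine Language.mem_mul.2 ⟨([x] :: ls).flatten, Language.mem_kstar.2 ⟨_, rfl, ?_⟩, l, hl, rfl⟩
      intro y hy
      rcases List.mem_cons.1 hy with rfl | hy
      · exact Language.mem_mul.2 ⟨[], by intro x hx; simp at hx, [x], rfl, rfl⟩
      · exact hls y hy

theorem mem_cons_mul {A : Type} {a : A} {X : Language A} {w : List A} :
    w ∈ ({[a]} : Language A) * X ↔ ∃ v ∈ X, w = a :: v := by
  rw [Language.mem_mul]
  constructor
  · rintro ⟨p, hp, q, hq, rfl⟩
    have hp' : p = [a] := hp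
    subst hp'
    exact ⟨q, hq, rfl⟩
  · rintro ⟨v, hv, rfl⟩
    exact ⟨[a], rfl, v, hv, rfl⟩

open Classical in
/-- The Wheeler DFA for `{a,b}·(S ∪ {c})*` with one state per letter. -/
noncomputable def theM {A Q : Type} (e : WithBot A ≃ Q) (S : Set A) (a b c : A) : PDFA A Q where
  init := e ⊥
  trans q x := if e.symm q = ⊥ then
      if x = a ∨ x = b then some (e (x : WithBot A)) else none
    else if x ∈ S ∪ {c} then some (e (x : WithBot A)) else none
  accept q := q ≠ e ⊥

theorem theM_trans {A Q : Type} (e : WithBot A ≃ Q) (S : Set A) (a b c : A) {q x v}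
    (h : (theM e S a b c).trans q x = some v) : v = e (x : WithBot A) := by
  simp only [theM] at h
  split at h <;> split at h <;> simp_all

theorem theM_some {A Q : Type} (e : WithBot A ≃ Q) (S : Set A) (a b c y : A) (w : List A) :
    (∃ q, (theM e S a b c).evalFrom (e (y : WithBot A)) w = some q ∧ (theM e S a b c).accept q) ↔
      w ∈ wordsOver (S ∪ {c}) := by
  induction w generalizing y with
  | nil =>
    simp only [PDFA.evalFrom, theM]
    constructor
    · intro _ x hx; simp at hx
    · intro _; exact ⟨_, rfl, by simp⟩
  | cons x w ih =>
    classical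
    have ht : (theM e S a b c).trans (e (y : WithBot A)) x =
        if x ∈ S ∪ {c} then some (e (x : WithBot A)) else none := by
      simp [theM]
    by_cases hx : x ∈ S ∪ {c}
    · rw [if_pos hx] at ht
      simp only [PDFA.evalFrom, ht, Option.bind_some]
      rw [ih]
      constructor
      · intro h z hz
        rcases List.mem_cons.1 hz with rfl | hz
        · exact hx
        · exact h z hz
      · intro h z hz
        exact h z (List.mem_cons_of_mem _ hz)
    · rw [if_neg hx] at ht
      simp only [PDFA.evalFrom, ht, Option.bind_none]
      constructor
      · rintro ⟨q, hq, _⟩; simp at hq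
      · intro h; exact absurd (h x (by simp)) hx

theorem theM_none {A Q : Type} (e : WithBot A ≃ Q) (S : Set A) (a b c : A) (w : List A) :
    w ∈ (theM e S a b c).accepts ↔
      ∃ v ∈ wordsOver (S ∪ {c}), w = a :: v ∨ w = b :: v := by
  have hi : (theM e S a b c).init = e ⊥ := rfl
  simp only [PDFA.accepts, Set.mem_ofPred_eq, hi]
  cases w with
  | nil =>
    simp [PDFA.evalFrom, theM]
  | cons x w =>
    classical
    have ht : (theM e S a b c).trans (e ⊥) x =
        if x = a ∨ x = b then some (e (x : WithBot A)) else none := by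
      simp [theM]
    by_cases hx : x = a ∨ x = b
    · rw [if_pos hx] at ht
      simp only [PDFA.evalFrom, ht, Option.bind_some]
      rw [theM_some]
      constructor
      · intro h
        exact ⟨w, h, by rcases hx with rfl | rfl <;> simp⟩
      · rintro ⟨v, hv, h⟩
        have : w = v := by rcases h with h | h <;> exact (List.cons.inj h).2
        rwa [this]
    · rw [if_neg hx] at ht
      simp only [PDFA.evalFrom, ht, Option.bind_none]
      constructor
      · rintro ⟨q, hq, _⟩; simp at hq
      · rintro ⟨v, hv, h⟩
        exact absurd (by rcases h with h | h <;> simp [(List.cons.inj h).1]) hx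

theorem theM_wheeler {A Q : Type} [LinearOrder A] (e : WithBot A ≃ Q) (S : Set A) (a b c : A) :
    IsWheelerOrder (theM e S a b c)
      (fun p q => e.symm p < e.symm q) := by
  refine ⟨?_, ?_, ?_, ?_⟩
  · exact { trichotomous := fun p q h1 h2 => e.symm.injective
              (le_antisymm (α := WithBot A) (not_lt.1 h2) (not_lt.1 h1))
            irrefl := fun p => lt_irrefl (α := WithBot A) _
            trans := fun p q r => lt_trans (α := WithBot A) }
  · intro q hq
    have hq' : q ≠ e ⊥ := hq
    have h1 : e.symm q ≠ ⊥ := fun h => hq' (by rw [← h]; simp)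
    have h2 : e.symm (theM e S a b c).init = ⊥ := by simp [theM]
    beta_reduce
    rw [h2]
    exact bot_lt_iff_ne_bot.2 h1
  · intro q x h
    have := theM_trans e S a b c h
    have h3 : e ⊥ = e (x : WithBot A) := this
    simp at h3
  · intro u₁ a₁ v₁ u₂ a₂ v₂ h1 h2
    have h1 := theM_trans e S a b c h1
    have h2 := theM_trans e S a b c h2
    subst h1 h2
    constructor
    · intro h
      simp only [Equiv.symm_apply_apply]
      exact WithBot.coe_lt_coe.2 h
    · rintro rfl _
      right; rfl

theorem no_chain {n : ℕ} {r : Fin n → Fin n → Prop} (hr : IsStrictTotalOrder (Fin n) r)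
    (p : ℕ → Fin n) (h : ∀ i, r (p i) (p (i + 1))) : False := by
  have hlt : ∀ i k, r (p i) (p (i + k + 1)) := by
    intro i k
    induction k with
    | zero => exact h i
    | succ k ih => exact hr.trans _ _ _ ih (h _)
  have hinj : Function.Injective p := by
    intro i j hij
    by_contra hne
    rcases Nat.lt_or_gt_of_ne hne with hl | hl
    · obtain ⟨k, rfl⟩ := Nat.exists_eq_add_of_lt hl
      have := hlt i k
      rw [← hij] at this
      exact hr.irrefl _ this
    · obtain ⟨k, rfl⟩ := Nat.exists_eq_add_of_lt hl
      have := hlt j k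
      rw [hij] at this
      exact hr.irrefl _ this
  exact not_injective_infinite_finite p hinj

section Statement9

open Computability

/-- the reduction in Proposition 1 of the paper: for every
linear order on `Σ' = Σ ∪ {a,b,c}` with `a ≺ b ≺ c`,
`L = Σ*` iff `L'' = a·((L·c)*·L) + b·(Σ ∪ {c})*` is Wheeler. -/
theorem statement9 {A : Type} [Fintype A] [inst : LinearOrder A]
    (S : Set A) (a b c : A)
    (hab : a < b) (hbc : b < c)
    (ha : a ∉ S) (hb : b ∉ S) (hc : c ∉ S)
    (hcover : ∀ x : A, x ∈ S ∨ x = a ∨ x = b ∨ x = c)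
    (L : Language A) (hsub : ∀ w ∈ L, ∀ x ∈ w, x ∈ S) (heps : [] ∈ L)
    (hreg : IsRegular L)
    (L'' : Language A)
    (hL'' : L'' = {[a]} * ((L * {[c]})∗ * L) + {[b]} * wordsOver (S ∪ {c})) :
    L = wordsOver S ↔ IsWheelerLang L'' := by
  have hX : ∀ v, a :: v ∈ L'' ↔ v ∈ (L * {[c]})∗ * L := by
    intro v
    rw [hL'', Language.mem_add, mem_cons_mul, mem_cons_mul]
    constructor
    · rintro (⟨u, hu, h⟩ | ⟨u, hu, h⟩)
      · rwa [(List.cons.inj h).2]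
      · exact absurd (List.cons.inj h).1 hab.ne
    · intro h; exact Or.inl ⟨v, h, rfl⟩
  have hY : ∀ v, v ∈ wordsOver (S ∪ {c}) → b :: v ∈ L'' := by
    intro v h
    rw [hL'', Language.mem_add, mem_cons_mul, mem_cons_mul]
    exact Or.inr ⟨v, h, rfl⟩
  constructor
  · rintro rfl
    refine ⟨_, theM (Fintype.equivFin (WithBot A)) S a b c, _, theM_wheeler _ S a b c, ?_⟩
    apply Set.ext
    intro w
    rw [theM_none]
    change _ ↔ w ∈ L''
    rw [hL'', Language.mem_add, mem_cons_mul, mem_cons_mul]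
    constructor
    · rintro ⟨v, hv, h | h⟩
      · exact Or.inl ⟨v, over_kstar hv, h⟩
      · exact Or.inr ⟨v, hv, h⟩
    · rintro (⟨v, hv, h⟩ | ⟨v, hv, h⟩)
      · exact ⟨v, kstar_over hsub hv, Or.inl h⟩
      · exact ⟨v, hv, Or.inr h⟩
  · rintro ⟨n, M, r, ⟨hr, -, -, hW⟩, hM⟩
    by_contra hne
    have hex : ∃ w, (∀ x ∈ w, x ∈ S) ∧ w ∉ L := by
      by_contra hcon
      push Not at hcon
      apply hne
      apply Set.ext
      intro w
      exact ⟨fun h => hsub w h, fun h => hcon w h⟩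
    obtain ⟨w, hwS, hwL⟩ := hex
    have hacc : ∀ v, v ∈ L'' ↔ ∃ q, M.evalFrom M.init v = some q ∧ M.accept q := by
      intro v
      exact (Set.ext_iff.1 hM v).symm
    have hci : ∀ i, List.replicate i c ∈ (L * {[c]})∗ := by
      intro i
      refine Language.mem_kstar.2 ⟨List.replicate i [c], by simp, ?_⟩
      intro y hy
      rw [List.eq_of_mem_replicate hy]
      exact Language.mem_mul.2 ⟨[], heps, [c], rfl, rfl⟩
    have hp : ∀ i, ∃ q, M.evalFrom M.init (a :: List.replicate i c) = some q := by
      intro i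
      have : a :: List.replicate i c ∈ L'' :=
        (hX _).2 (Language.mem_mul.2 ⟨_, hci i, [], heps, by simp⟩)
      obtain ⟨q, hq, -⟩ := (hacc _).1 this
      exact ⟨q, hq⟩
    have hq : ∀ i, ∃ q, M.evalFrom M.init (b :: List.replicate i c) = some q := by
      intro i
      have : b :: List.replicate i c ∈ L'' := by
        apply hY
        intro x hx
        rw [List.eq_of_mem_replicate hx]
        right; rfl
      obtain ⟨q, hq, -⟩ := (hacc _).1 this
      exact ⟨q, hq⟩
    choose p hp using hp
    choose q hq using hq
    have haw : ∀ i, a :: (List.replicate i c ++ w) ∉ L'' := by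
      intro i h
      rw [hX] at h
      obtain ⟨x, hx, l, hl, h⟩ := Language.mem_mul.1 h
      have hu : List.replicate i c = [] ∨ ∃ u', List.replicate i c = u' ++ [c] := by
        cases i with
        | zero => left; rfl
        | succ i => right; exact ⟨List.replicate i c, List.replicate_succ'⟩
      have := suffix_unique hu (kstar_end hx) (fun h => hc (hwS _ h))
        (fun h => hc (hsub _ hl _ h)) h.symm
      exact hwL (this ▸ hl)
    have hbw : ∀ i, b :: (List.replicate i c ++ w) ∈ L'' := by
      intro i
      apply hY
      intro x hx
      rcases List.mem_append.1 hx with hx | hx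
      · rw [List.eq_of_mem_replicate hx]
        right; rfl
      · exact Or.inl (hwS x hx)
    have hpq : ∀ i j, p i ≠ q j := by
      intro i j h
      have h1 := hbw j
      apply haw i
      rw [hacc] at h1 ⊢
      rw [← List.cons_append, PDFA.evalFrom_append] at h1 ⊢
      rw [hq] at h1
      rw [hp, h]
      exact h1
    have hps : ∀ i, M.trans (p i) c = some (p (i + 1)) := by
      intro i
      have := hp (i + 1)
      rw [List.replicate_succ', ← List.cons_append, PDFA.evalFrom_append, hp] at this
      simpa [PDFA.evalFrom] using this
    have hqs : ∀ i, M.trans (q i) c = some (q (i + 1)) := by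
      intro i
      have := hq (i + 1)
      rw [List.replicate_succ', ← List.cons_append, PDFA.evalFrom_append, hq] at this
      simpa [PDFA.evalFrom] using this
    have hp0 : M.trans M.init a = some (p 0) := by
      simpa [PDFA.evalFrom] using hp 0
    have hq0 : M.trans M.init b = some (q 0) := by
      simpa [PDFA.evalFrom] using hq 0
    have h1 : ∀ i, r (p i) (q i) := by
      intro i
      induction i with
      | zero => exact (hW _ _ _ _ _ _ hp0 hq0).1 hab
      | succ i ih =>
        exact ((hW _ _ _ _ _ _ (hps i) (hqs i)).2 rfl ih).resolve_right (hpq _ _)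
    have h2 : ∀ i, r (q i) (p (i + 1)) := by
      intro i
      induction i with
      | zero => exact (hW _ _ _ _ _ _ hq0 (hps 0)).1 hbc
      | succ i ih =>
        exact ((hW _ _ _ _ _ _ (hqs i) (hps (i + 1))).2 rfl ih).resolve_right (hpq _ _).symm
    exact no_chain hr p (fun i => hr.trans _ _ _ (h1 i) (h2 i))

end Statement9

end WheelerPaper
end

section
/- Let Σ' be a finite alphabet, let a, b ∈ Σ' be distinct, and let T = Σ' \ {a,b}. Then for every linear order ≺ on Σ', the language {a,b}·T* (all words whose first letter is a or b and whose remaining letters lie in T) is Wheeler with respect to (Σ',≺). -/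
/-!
Common framework: words over an ordered alphabet, co-lexicographic order,
(partial) DFAs and NFAs, Wheeler automata and Wheeler languages,
following "Ordering regular languages: a danger zone".
-/

namespace WheelerPaper

section Statement10

/-- The automaton for `{a,b}·T*` whose states remember the last letter read. -/
noncomputable def lastAut {A Q : Type} (a b : A) (e : Option A ≃ Q) : PDFA A Q where
  init := e none
  trans := fun q x =>
    open Classical in
    if ((e.symm q = none) ↔ (x = a ∨ x = b)) then some (e (some x)) else none
  accept := fun q => e.symm q ≠ none

theorem lastAut_eval {A Q : Type} (a b : A) (e : Option A ≃ Q) (w : List A) :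
    ∀ c : A, (∃ q, (lastAut a b e).evalFrom (e (some c)) w = some q ∧ (lastAut a b e).accept q) ↔
      ∀ x ∈ w, x ≠ a ∧ x ≠ b := by
  induction w with
  | nil => intro c; simp [PDFA.evalFrom, lastAut]
  | cons y w ih =>
    intro c
    by_cases h : y = a ∨ y = b
    · have h1 : (lastAut a b e).trans (e (some c)) y = none := by simp [lastAut, h]
      simp only [PDFA.evalFrom, h1]
      simp
      tauto
    · have h1 : (lastAut a b e).trans (e (some c)) y = some (e (some y)) := by
        simp [lastAut, h]
      simp only [PDFA.evalFrom, h1, Option.bind_some, ih y]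
      simp
      tauto

theorem lastAut_accepts {A Q : Type} (a b : A) (e : Option A ≃ Q) :
    (lastAut a b e).accepts = {w | ∃ (h : A) (t : List A),
                 w = h :: t ∧ (h = a ∨ h = b) ∧ ∀ x ∈ t, x ≠ a ∧ x ≠ b} := by
  ext w
  cases w with
  | nil => simp [PDFA.accepts, PDFA.evalFrom, lastAut]
  | cons y w =>
    have hi : (lastAut a b e).init = e none := rfl
    simp only [PDFA.accepts, Set.mem_setOf_eq, hi]
    by_cases h : y = a ∨ y = b
    · have h1 : (lastAut a b e).trans (e none) y = some (e (some y)) := by simp [lastAut, h]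
      simp only [PDFA.evalFrom, h1, Option.bind_some, lastAut_eval]
      constructor
      · intro hw; exact ⟨y, w, rfl, h, hw⟩
      · rintro ⟨_, _, h2, _, hw⟩
        cases h2; exact hw
    · have h1 : (lastAut a b e).trans (e none) y = none := by simp [lastAut, h]
      simp only [PDFA.evalFrom, h1]
      constructor
      · rintro ⟨q, hq, _⟩; simp at hq
      · rintro ⟨_, _, h2, h3, _⟩
        cases h2; exact absurd h3 h

theorem lastAut_wheeler {A Q : Type} [LinearOrder A] (a b : A) (e : Option A ≃ Q) :
    IsWheelerOrder (lastAut a b e)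
      (fun p q => @LT.lt (WithBot A) _ (e.symm p) (e.symm q)) := by
  have key : ∀ u x v, (lastAut a b e).trans u x = some v → v = e (some x) := by
    intro u x v h
    simp only [lastAut] at h
    split_ifs at h
    exact (Option.some.inj h).symm
  refine ⟨?_, ?_, ?_, ?_⟩
  · exact
      { trichotomous := fun p q h1 h2 =>
          e.symm.injective (le_antisymm (α := WithBot A) (not_lt.1 h2) (not_lt.1 h1))
        irrefl := fun p => lt_irrefl (α := WithBot A) _
        trans := fun p q s => lt_trans (α := WithBot A) }
  · intro q hq
    have h : e.symm q ≠ none := fun h => hq (by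
      change q = e none
      rw [← h]; simp)
    have h2 : e.symm (lastAut a b e).init = none := e.symm_apply_apply none
    rw [h2]
    exact (bot_lt_iff_ne_bot (α := WithBot A)).2 h
  · intro q x h
    have := key _ _ _ h
    have h3 : e none = e (some x) := this
    simp at h3
  · intro u₁ a₁ v₁ u₂ a₂ v₂ h1 h2
    have e1 := key _ _ _ h1
    have e2 := key _ _ _ h2
    subst e1 e2
    refine ⟨fun h => ?_, fun h _ => Or.inr (by rw [h])⟩
    simp only [Equiv.symm_apply_apply]
    exact WithBot.coe_lt_coe.2 h

/-- for distinct `a, b ∈ Σ'` and `T = Σ' \ {a,b}`, the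
language `{a,b}·T*` is Wheeler with respect to every linear order on `Σ'`. -/
theorem statement10 {A : Type} [Fintype A] (a b : A) (hab : a ≠ b)
    (L : Set (List A))
    (hL : L = {w | ∃ (h : A) (t : List A),
                 w = h :: t ∧ (h = a ∨ h = b) ∧ ∀ x ∈ t, x ≠ a ∧ x ≠ b}) :
    ∀ inst : LinearOrder A, @IsWheelerLang A inst L := by
  intro inst
  subst hL
  exact ⟨Fintype.card (Option A), lastAut a b (Fintype.equivFin (Option A)), _,
    lastAut_wheeler a b _, lastAut_accepts a b _⟩

end Statement10

end WheelerPaper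
end

section
/- Let A be a DFA over an ordered alphabet (Σ,≺) in which every state is reachable from the initial state. If <₁ and <₂ are two linear orders on the states of A each of which makes A a Wheeler DFA, then <₁ and <₂ coincide. In other words, a WDFA admits a unique order of its states that makes it Wheeler. -/
/-!
Common framework: words over an ordered alphabet, co-lexicographic order,
(partial) DFAs and NFAs, Wheeler automata and Wheeler languages,
following "Ordering regular languages: a danger zone".
-/

namespace WheelerPaper

section Statement11

theorem PDFA.reach_induct {A Q : Type} (M : PDFA A Q) (P : Q → Prop)
    (hs : ∀ u a v, P u → M.trans u a = some v → P v) :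
    ∀ (w : List A) (s q : Q), P s → M.evalFrom s w = some q → P q := by
  intro w
  induction w with
  | nil =>
    intro s q h e
    simp only [PDFA.evalFrom, Option.some.injEq] at e
    exact e ▸ h
  | cons a w ih =>
    intro s q h e
    simp only [PDFA.evalFrom, Option.bind_eq_some_iff] at e
    obtain ⟨t, ht, e⟩ := e
    exact ih t q (hs s a t h ht) e

/-- a DFA whose states are all reachable admits at most one
Wheeler order on its states. -/
theorem statement11 {A Q : Type} [LinearOrder A] [Fintype Q]
    (M : PDFA A Q)
    (hreach : ∀ q : Q, ∃ α : List A, M.evalFrom M.init α = some q)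
    (r₁ r₂ : Q → Q → Prop)
    (h₁ : IsWheelerOrder M r₁) (h₂ : IsWheelerOrder M r₂) :
    r₁ = r₂ := by
  have ind : ∀ P : Q → Prop, P M.init → (∀ u a v, P u → M.trans u a = some v → P v) →
      ∀ q, P q := by
    intro P h0 hs q
    obtain ⟨w, hw⟩ := hreach q
    exact M.reach_induct P hs w _ q h0 hw
  have last : ∀ q, q = M.init ∨ ∃ v b, M.trans v b = some q :=
    ind _ (Or.inl rfl) (fun u a v _ h => Or.inr ⟨u, a, h⟩)
  obtain ⟨s1, m1, -, w1⟩ := h₁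
  obtain ⟨s2, m2, -, w2⟩ := h₂
  have irr : ∀ x, ¬ r₁ x x := fun x => irrefl_of r₁ x
  have asy : ∀ x y, r₁ x y → ¬ r₁ y x := fun x y => asymm_of r₁
  have tri : ∀ x y, r₁ x y ∨ x = y ∨ r₁ y x := fun x y => trichotomous_of r₁ x y
  have irr2 : ∀ x, ¬ r₂ x x := fun x => irrefl_of r₂ x
  have asy2 : ∀ x y, r₂ x y → ¬ r₂ y x := fun x y => asymm_of r₂
  have tri2 : ∀ x y, r₂ x y ∨ x = y ∨ r₂ y x := fun x y => trichotomous_of r₂ x y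
  have base : ∀ q, (r₁ M.init q → r₂ M.init q) ∧ (r₁ q M.init → r₂ q M.init) := by
    intro q
    by_cases h : q = M.init
    · subst h
      exact ⟨fun h => (irr _ h).elim, fun h => (irr _ h).elim⟩
    · exact ⟨fun _ => m2 q h, fun h' => (asy _ _ h' (m1 q h)).elim⟩
  have key : ∀ p, ∀ q, (r₁ p q → r₂ p q) ∧ (r₁ q p → r₂ q p) := by
    refine ind (fun p => ∀ q, (r₁ p q → r₂ p q) ∧ (r₁ q p → r₂ q p)) base ?_
    intro u a p ih hp q
    rcases last q with rfl | ⟨v, b, hq⟩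
    · exact (base p).symm
    rcases lt_trichotomy a b with hab | rfl | hab
    · exact ⟨fun _ => (w2 _ _ _ _ _ _ hp hq).1 hab,
        fun h => (asy _ _ h ((w1 _ _ _ _ _ _ hp hq).1 hab)).elim⟩
    · have e1 := (w1 _ _ _ _ _ _ hp hq).2 rfl
      have e2 := (w1 _ _ _ _ _ _ hq hp).2 rfl
      have f1 := (w2 _ _ _ _ _ _ hp hq).2 rfl
      have f2 := (w2 _ _ _ _ _ _ hq hp).2 rfl
      have i := ih v
      have t := tri u v
      have := irr p
      have := asy p q
      grind
    · exact ⟨fun h => (asy _ _ h ((w1 _ _ _ _ _ _ hq hp).1 hab)).elim,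
        fun _ => (w2 _ _ _ _ _ _ hq hp).1 hab⟩
  funext p q
  apply propext
  refine ⟨(key p q).1, fun h => ?_⟩
  rcases tri p q with h' | h' | h'
  · exact h'
  · subst h'
    exact (irr2 _ h).elim
  · exact (asy2 _ _ h ((key p q).2 h')).elim

end Statement11

end WheelerPaper
end

section
/- Let (A,<) be a WDFA over (Σ,≺) with initial state q₀ in which every state is reachable, and for each state q let I_q = {α ∈ Σ* : δ(q₀,α) = q}. Then for all distinct states q and p: q < p if and only if α ≺ β (co-lexicographically) for every α ∈ I_q and every β ∈ I_p. -/
/-!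
Common framework: words over an ordered alphabet, co-lexicographic order,
(partial) DFAs and NFAs, Wheeler automata and Wheeler languages,
following "Ordering regular languages: a danger zone".
-/

namespace WheelerPaper

theorem evalFrom_snoc {A Q : Type} (M : PDFA A Q) (w : List A) (a : A) :
    ∀ q p : Q, M.evalFrom q (w ++ [a]) = some p →
      ∃ u, M.evalFrom q w = some u ∧ M.trans u a = some p := by
  induction w with
  | nil =>
    intro q p h
    cases hq : M.trans q a with
    | none => simp [PDFA.evalFrom, hq] at h
    | some v =>
      simp [PDFA.evalFrom, hq] at h
      exact ⟨q, rfl, by rw [hq, h]⟩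
  | cons b w ih =>
    intro q p h
    cases hq : M.trans q b with
    | none => simp [PDFA.evalFrom, hq] at h
    | some v =>
      simp only [List.cons_append, PDFA.evalFrom, hq, Option.bind_some] at h ⊢
      exact ih v p h

theorem lex_of_rel {A Q : Type} [LinearOrder A]
    (M : PDFA A Q) (r : Q → Q → Prop) (hW : IsWheelerOrder M r) (x : List A) :
    ∀ (y : List A) (q p : Q), M.evalFrom M.init x.reverse = some q →
      M.evalFrom M.init y.reverse = some p → r q p → List.Lex (· < ·) x y := by
  obtain ⟨hs, hmin, _, hw⟩ := hW
  have hirr : ∀ a, ¬ r a a := fun a => irrefl_of r a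
  have hasym : ∀ a b, r a b → ¬ r b a := fun a b h h' => asymm_of r h h'
  induction x with
  | nil =>
    intro y q p hx hy h
    cases y with
    | nil =>
      rw [hx] at hy
      cases hy
      exact absurd h (hirr _)
    | cons b y => exact List.Lex.nil
  | cons a x ih =>
    intro y q p hx hy h
    cases y with
    | nil =>
      simp only [List.reverse_nil, PDFA.evalFrom, Option.some.injEq] at hy
      subst hy
      by_cases hq : q = M.init
      · subst hq
        exact absurd h (hirr _)
      · exact absurd h (hasym _ _ (hmin q hq))
    | cons b y =>
      rw [List.reverse_cons] at hx hy
      obtain ⟨u, hu, hua⟩ := evalFrom_snoc M _ _ _ _ hx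
      obtain ⟨v, hv, hvb⟩ := evalFrom_snoc M _ _ _ _ hy
      rcases lt_trichotomy a b with hab | hab | hab
      · exact List.Lex.rel hab
      · subst hab
        rcases trichotomous_of r u v with huv | huv | huv
        · exact List.Lex.cons (ih y u v hu hv huv)
        · subst huv
          rw [hua] at hvb
          cases hvb
          exact absurd h (hirr _)
        · rcases (hw _ _ _ _ _ _ hvb hua).2 rfl huv with h1 | h1
          · exact absurd h (hasym _ _ h1)
          · subst h1
            exact absurd h (hirr _)
      · exact absurd h (hasym _ _ ((hw _ _ _ _ _ _ hvb hua).1 hab))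

section Statement12

/-- in a WDFA with all states reachable, `q < p` iff every
word entering `q` co-lexicographically precedes every word entering `p`. -/
theorem statement12 {A Q : Type} [LinearOrder A] [Fintype Q]
    (M : PDFA A Q) (r : Q → Q → Prop) (hW : IsWheelerOrder M r)
    (hreach : ∀ q : Q, ∃ α : List A, M.evalFrom M.init α = some q) :
    ∀ q p : Q, q ≠ p →
      (r q p ↔ ∀ α : List A, M.evalFrom M.init α = some q →
               ∀ β : List A, M.evalFrom M.init β = some p → Colex α β) := by
  have key : ∀ q p : Q, r q p → ∀ α : List A, M.evalFrom M.init α = some q →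
      ∀ β : List A, M.evalFrom M.init β = some p → Colex α β := by
    intro q p h α hα β hβ
    exact lex_of_rel M r hW α.reverse β.reverse q p (by simpa using hα) (by simpa using hβ) h
  intro q p hqp
  refine ⟨key q p, fun h => ?_⟩
  have hs := hW.1
  rcases trichotomous_of r q p with h1 | h1 | h1
  · exact h1
  · exact absurd h1 hqp
  · obtain ⟨α, hα⟩ := hreach q
    obtain ⟨β, hβ⟩ := hreach p
    have h2 : α.reverse < β.reverse := h α hα β hβ
    have h3 : β.reverse < α.reverse := key p q h1 β hβ α hα
    exact absurd h3 (lt_asymm h2)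

end Statement12

end WheelerPaper
end

section
/- Let (A,<) be a WNFA over (Σ,≺) with n states, initial state q₀, recognizing L = L(A). Then the powerset (subset-construction) determinization of A, restricted to its reachable states, is a DFA recognizing L with at most 2n states (i.e., the number of distinct nonempty sets δ(q₀,α) for α ∈ Pref(L) is at most 2n), and this DFA is itself Wheeler with respect to (Σ,≺) under a suitable linear order of its states. -/
/-!
Common framework: words over an ordered alphabet, co-lexicographic order,
(partial) DFAs and NFAs, Wheeler automata and Wheeler languages,
following "Ordering regular languages: a danger zone".
-/

namespace WheelerPaper

/-- The comparison of reachable sets. -/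
def SetR {Q : Type} (r : Q → Q → Prop) (I J : Set Q) : Prop :=
  ∀ u ∈ I, ∀ v ∈ J, r v u → u ∈ J ∧ v ∈ I

theorem SetR.antisymm {Q : Type} {r : Q → Q → Prop} (tri : ∀ x y, r x y ∨ x = y ∨ r y x)
    {I J : Set Q} (hI : I.Nonempty) (hJ : J.Nonempty) (h : SetR r I J) (h' : SetR r J I) :
    I = J := by
  obtain ⟨i, hi⟩ := hI
  obtain ⟨j, hj⟩ := hJ
  ext x
  constructor
  · intro hx
    rcases tri j x with c | c | c
    · exact (h x hx j hj c).1
    · exact c ▸ hj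
    · exact (h' j hj x hx c).2
  · intro hx
    rcases tri i x with c | c | c
    · exact (h' x hx i hi c).1
    · exact c ▸ hi
    · exact (h i hi x hx c).2

theorem SetR.trans' {Q : Type} {r : Q → Q → Prop} (tri : ∀ x y, r x y ∨ x = y ∨ r y x)
    (tr : ∀ x y z, r x y → r y z → r x z)
    {I J K : Set Q} (hJ : J.Nonempty) (h : SetR r I J) (h' : SetR r J K) :
    SetR r I K := by
  intro u hu w hw hwu
  have key : u ∈ J := by
    obtain ⟨v, hv⟩ := hJ
    rcases tri v u with c | c | c
    · exact (h u hu v hv c).1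
    · exact c ▸ hv
    · have := h' v hv w hw (tr _ _ _ hwu c)
      exact (h u hu w this.2 hwu).1
  have h1 := h' u key w hw hwu
  exact ⟨h1.1, (h u hu w h1.2 hwu).2⟩

open Classical in
/-- Rank of a set, used for counting. -/
noncomputable def setRank {Q : Type} [Fintype Q] (r : Q → Q → Prop) (I : Set Q) : ℕ :=
  (Finset.univ.filter fun x => ∃ y ∈ I, r x y ∨ x = y).card +
  (Finset.univ.filter fun x => ∀ y ∈ I, r x y).card

open Classical in
theorem setRank_lt {Q : Type} [Fintype Q] {r : Q → Q → Prop}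
    (tri : ∀ x y, r x y ∨ x = y ∨ r y x)
    (irr : ∀ x, ¬ r x x) (tr : ∀ x y z, r x y → r y z → r x z)
    {I J : Set Q} (hI : I.Nonempty) (hJ : J.Nonempty) (h : SetR r I J) (hne : I ≠ J) :
    setRank r I < setRank r J := by
  obtain ⟨i, hi⟩ := hI
  obtain ⟨j, hj⟩ := hJ
  have s1 : (Finset.univ.filter fun x => ∃ y ∈ I, r x y ∨ x = y) ⊆
      (Finset.univ.filter fun x => ∃ y ∈ J, r x y ∨ x = y) := by
    intro x
    simp only [Finset.mem_filter, Finset.mem_univ, true_and]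
    rintro ⟨u, hu, hxu⟩
    rcases tri j u with c | c | c
    · exact ⟨u, (h u hu j hj c).1, hxu⟩
    · exact ⟨u, c ▸ hj, hxu⟩
    · refine ⟨j, hj, Or.inl ?_⟩
      rcases hxu with hxu | rfl
      · exact tr _ _ _ hxu c
      · exact c
  have s2 : (Finset.univ.filter fun x => ∀ y ∈ I, r x y) ⊆
      (Finset.univ.filter fun x => ∀ y ∈ J, r x y) := by
    intro x
    simp only [Finset.mem_filter, Finset.mem_univ, true_and]
    intro hx v hv
    rcases tri v i with c | c | c
    · exact hx v (h i hi v hv c).2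
    · exact c ▸ hx i hi
    · exact tr _ _ _ (hx i hi) c
  have c1 := Finset.card_le_card s1
  have c2 := Finset.card_le_card s2
  unfold setRank
  by_cases hsub : I ⊆ J
  · have : ∃ y ∈ J, y ∉ I := by
      by_contra hcon
      push Not at hcon
      exact hne (Set.Subset.antisymm hsub hcon)
    obtain ⟨y, hyJ, hyI⟩ := this
    have : (Finset.univ.filter fun x => ∃ y ∈ I, r x y ∨ x = y) ⊂
      (Finset.univ.filter fun x => ∃ y ∈ J, r x y ∨ x = y) := by
      refine (Finset.ssubset_iff_of_subset s1).2 ⟨y, ?_, ?_⟩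
      · simp only [Finset.mem_filter, Finset.mem_univ, true_and]
        exact ⟨y, hyJ, Or.inr rfl⟩
      · simp only [Finset.mem_filter, Finset.mem_univ, true_and]
        rintro ⟨u, hu, c | rfl⟩
        · exact hyI (h u hu y hyJ c).2
        · exact hyI hu
    have := Finset.card_lt_card this
    omega
  · obtain ⟨x, hxI, hxJ⟩ := Set.not_subset.1 hsub
    have : (Finset.univ.filter fun x => ∀ y ∈ I, r x y) ⊂
      (Finset.univ.filter fun x => ∀ y ∈ J, r x y) := by
      refine (Finset.ssubset_iff_of_subset s2).2 ⟨x, ?_, ?_⟩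
      · simp only [Finset.mem_filter, Finset.mem_univ, true_and]
        intro v hv
        rcases tri v x with c | c | c
        · exact absurd (h x hxI v hv c).1 hxJ
        · exact absurd (c ▸ hv) hxJ
        · exact c
      · simp only [Finset.mem_filter, Finset.mem_univ, true_and]
        intro hx
        exact irr x (hx x hxI)
    have := Finset.card_lt_card this
    omega

open Classical in
theorem setRank_mem {Q : Type} [Fintype Q] {r : Q → Q → Prop} {I : Set Q} (hI : I.Nonempty) :
    setRank r I ∈ Set.Icc 1 (2 * Fintype.card Q) := by
  obtain ⟨i, hi⟩ := hI
  have h1 : 0 < (Finset.univ.filter fun x => ∃ y ∈ I, r x y ∨ x = y).card :=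
    Finset.card_pos.2 ⟨i, by simpa using ⟨i, hi, Or.inr rfl⟩⟩
  have h2 := Finset.card_le_univ (Finset.univ.filter fun x => ∃ y ∈ I, r x y ∨ x = y)
  have h3 := Finset.card_le_univ (Finset.univ.filter fun x => ∀ y ∈ I, r x y)
  unfold setRank
  constructor <;> omega

theorem evalFrom_append {A Q : Type} (M : NFA' A Q) (P : Set Q) (x y : List A) :
    M.evalFrom P (x ++ y) = M.evalFrom (M.evalFrom P x) y := by
  induction x generalizing P with
  | nil => rfl
  | cons a x ih => exact ih _

theorem evalFrom_snoc_s15 {A Q : Type} (M : NFA' A Q) (P : Set Q) (x : List A) (a : A) :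
    M.evalFrom P (x ++ [a]) = M.stepSet (M.evalFrom P x) a := by
  rw [evalFrom_append]; rfl

theorem evalFrom_mono {A Q : Type} (M : NFA' A Q) {P P' : Set Q} (h : P ⊆ P') (x : List A) :
    M.evalFrom P x ⊆ M.evalFrom P' x := by
  induction x generalizing P P' with
  | nil => exact h
  | cons a x ih => exact ih fun q ⟨p, hp, hq⟩ => ⟨p, h hp, hq⟩

theorem evalFrom_empty {A Q : Type} (M : NFA' A Q) (x : List A) :
    M.evalFrom ∅ x = ∅ := by
  induction x with
  | nil => rfl
  | cons a x ih =>
    have : M.stepSet ∅ a = ∅ := by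
      ext q; simp [NFA'.stepSet]
    simpa [NFA'.evalFrom, this] using ih

theorem SetR.step {A Q : Type} [LinearOrder A] {M : NFA' A Q} {r : Q → Q → Prop}
    (hW : IsWheelerNFAOrder M r) (tri : ∀ x y, r x y ∨ x = y ∨ r y x)
    (irr : ∀ x, ¬ r x x) (tr : ∀ x y z, r x y → r y z → r x z)
    {I J : Set Q} (h : SetR r I J) (a : A) : SetR r (M.stepSet I a) (M.stepSet J a) := by
  rintro u' ⟨u, hu, huu⟩ v' ⟨v, hv, hvv⟩ hlt
  have key : u ∈ J ∧ v ∈ I := by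
    rcases tri v u with c | c | c
    · exact h u hu v hv c
    · exact ⟨c ▸ hv, c ▸ hu⟩
    · rcases (hW.2.2.2 u a u' v a v' huu hvv).2 rfl c with d | d
      · exact absurd (tr _ _ _ hlt d) (irr _)
      · exact absurd (d ▸ hlt) (irr _)
  exact ⟨⟨u, key.1, huu⟩, ⟨v, key.2, hvv⟩⟩

theorem SetR.step_lt {A Q : Type} [LinearOrder A] {M : NFA' A Q} {r : Q → Q → Prop}
    (hW : IsWheelerNFAOrder M r)
    (irr : ∀ x, ¬ r x x) (tr : ∀ x y z, r x y → r y z → r x z)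
    (I J : Set Q) {a b : A} (hab : a < b) : SetR r (M.stepSet I a) (M.stepSet J b) := by
  rintro u' ⟨u, hu, huu⟩ v' ⟨v, hv, hvv⟩ hlt
  exact absurd (tr _ _ _ hlt ((hW.2.2.2 u a u' v b v' huu hvv).1 hab)) (irr _)

theorem SetR.init {A Q : Type} [LinearOrder A] {M : NFA' A Q} {r : Q → Q → Prop}
    (hW : IsWheelerNFAOrder M r)
    (irr : ∀ x, ¬ r x x) (tr : ∀ x y z, r x y → r y z → r x z)
    (J : Set Q) : SetR r {M.init} J := by
  rintro u rfl v hv hlt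
  by_cases hvi : v = M.init
  · exact absurd (hvi ▸ hlt) (irr _)
  · exact absurd (tr _ _ _ hlt (hW.2.1 v hvi)) (irr _)

theorem SetR.total {A Q : Type} [LinearOrder A] {M : NFA' A Q} {r : Q → Q → Prop}
    (hW : IsWheelerNFAOrder M r) (tri : ∀ x y, r x y ∨ x = y ∨ r y x)
    (irr : ∀ x, ¬ r x x) (tr : ∀ x y z, r x y → r y z → r x z) (α β : List A) :
    SetR r (M.evalFrom {M.init} α) (M.evalFrom {M.init} β) ∨
    SetR r (M.evalFrom {M.init} β) (M.evalFrom {M.init} α) := by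
  induction α using List.reverseRecOn generalizing β with
  | nil => exact Or.inl (SetR.init hW irr tr _)
  | append_singleton α a ih =>
    rcases List.eq_nil_or_concat β with rfl | ⟨β, b, rfl⟩
    · exact Or.inr (SetR.init hW irr tr _)
    · rw [List.concat_eq_append, evalFrom_snoc_s15, evalFrom_snoc_s15]
      rcases lt_trichotomy a b with c | rfl | c
      · exact Or.inl (SetR.step_lt hW irr tr _ _ c)
      · exact (ih β).imp (fun h => h.step hW tri irr tr a) (fun h => h.step hW tri irr tr a)
      · exact Or.inr (SetR.step_lt hW irr tr _ _ c)

section Statement15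

/-- the powerset determinization of a trim Wheeler NFA with
`n` states, restricted to the (nonempty) reachable subsets, is a Wheeler DFA
recognizing the same language with at most `2n` states. -/
theorem statement15 {A Q : Type} [LinearOrder A] [Fintype Q]
    (M : NFA' A Q) (r : Q → Q → Prop) (hW : IsWheelerNFAOrder M r)
    (htrim : M.Trim) (n : ℕ) (hn : Fintype.card Q = n)
    (L : Set (List A)) (hL : L = M.accepts)
    (S : Set (Set Q))
    (hS : S = {P | P.Nonempty ∧ ∃ α ∈ Pref L, M.evalFrom {M.init} α = P}) :
    S.ncard ≤ 2 * n ∧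
    ∃ (D : PDFA A S) (r' : S → S → Prop),
      IsWheelerOrder D r' ∧ D.accepts = L ∧
      (D.init : Set Q) = {M.init} ∧
      (∀ P : S, D.accept P ↔ ∃ q ∈ (P : Set Q), M.accept q) ∧
      (∀ (P P' : S) (a : A), D.trans P a = some P' →
        (P' : Set Q) = M.stepSet (P : Set Q) a) ∧
      (∀ (P : S) (a : A), M.stepSet (P : Set Q) a ∈ S →
        ∃ P' : S, D.trans P a = some P') := by
  classical
  have irr : ∀ x, ¬ r x x := fun x => hW.1.toIrrefl.irrefl x
  have tr : ∀ x y z, r x y → r y z → r x z := fun x y z => hW.1.toIsTrans.trans x y z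
  have tri : ∀ x y, r x y ∨ x = y ∨ r y x := by
    intro x y
    haveI := hW.1
    exact trichotomous_of r x y
  have hne : ∀ P ∈ S, P.Nonempty := by
    intro P hP; rw [hS] at hP; exact hP.1
  have hex : ∀ P ∈ S, ∃ α, M.evalFrom {M.init} α = P := by
    intro P hP; rw [hS] at hP; exact hP.2.imp fun _ h => h.2
  have hmem : ∀ α, (M.evalFrom {M.init} α).Nonempty → M.evalFrom {M.init} α ∈ S := by
    rintro α ⟨q, hq⟩
    rw [hS]
    refine ⟨⟨q, hq⟩, α, ?_, rfl⟩
    obtain ⟨β, q', hq', hacc⟩ := htrim.2 q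
    refine ⟨β, ?_⟩
    rw [hL]
    refine ⟨q', ?_, hacc⟩
    rw [evalFrom_append]
    exact evalFrom_mono M (Set.singleton_subset_iff.2 hq) β hq'
  have hstep : ∀ P ∈ S, ∀ a, (M.stepSet P a).Nonempty → M.stepSet P a ∈ S := by
    intro P hP a h
    obtain ⟨α, rfl⟩ := hex P hP
    rw [← evalFrom_snoc_s15] at h ⊢
    exact hmem _ h
  have htot : ∀ P ∈ S, ∀ P' ∈ S, SetR r P P' ∨ SetR r P' P := by
    intro P hP P' hP'
    obtain ⟨α, rfl⟩ := hex P hP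
    obtain ⟨β, rfl⟩ := hex P' hP'
    exact SetR.total hW tri irr tr α β
  have hinit : ({M.init} : Set Q) ∈ S := hmem [] ⟨M.init, rfl⟩
  refine ⟨?_, ?_⟩
  · have hinj : Set.InjOn (setRank r) S := by
      intro P hP P' hP' heq
      by_contra hcon
      rcases htot P hP P' hP' with h | h
      · exact absurd heq (setRank_lt tri irr tr (hne P hP) (hne P' hP') h hcon).ne
      · exact absurd heq (setRank_lt tri irr tr (hne P' hP') (hne P hP) h (Ne.symm hcon)).ne'
    have := Set.ncard_le_ncard_of_injOn (setRank r) (t := Set.Icc 1 (2 * n))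
      (fun P hP => hn ▸ setRank_mem (hne P hP)) hinj (Set.finite_Icc _ _)
    simpa [Set.ncard_eq_toFinset_card'] using this
  · let D : PDFA A S :=
      { init := ⟨{M.init}, hinit⟩
        trans := fun P a => if h : M.stepSet (P : Set Q) a ∈ S then some ⟨_, h⟩ else none
        accept := fun P => ∃ q ∈ (P : Set Q), M.accept q }
    have htrans : ∀ (P P' : S) (a : A), D.trans P a = some P' →
        (P' : Set Q) = M.stepSet (P : Set Q) a := by
      intro P P' a h
      by_cases hm : M.stepSet (P : Set Q) a ∈ S
      · simp only [D, hm, dite_true, Option.some.injEq] at h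
        rw [← h]
      · simp [D, hm] at h
    have heval : ∀ (w : List A) (P P' : S), D.evalFrom P w = some P' ↔
        M.evalFrom (P : Set Q) w = P' := by
      intro w
      induction w with
      | nil =>
        intro P P'
        simp [PDFA.evalFrom, NFA'.evalFrom, Subtype.ext_iff]
      | cons a w ih =>
        intro P P'
        by_cases hm : M.stepSet (P : Set Q) a ∈ S
        · have ht : D.trans P a = some ⟨_, hm⟩ := by simp [D, hm]
          simp only [PDFA.evalFrom, NFA'.evalFrom, ht, Option.bind_some]
          exact ih ⟨_, hm⟩ P'
        · have ht : D.trans P a = none := by simp [D, hm]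
          have he : M.stepSet (P : Set Q) a = ∅ := by
            by_contra hcon
            exact hm (hstep P P.2 a (Set.nonempty_iff_ne_empty.2 hcon))
          simp only [PDFA.evalFrom, NFA'.evalFrom, ht, Option.bind_none, he, evalFrom_empty]
          constructor
          · intro h; cases h
          · intro h
            exact absurd h.symm (hne P' P'.2).ne_empty
    refine ⟨D, fun P P' => P ≠ P' ∧ SetR r (P : Set Q) P', ⟨?_, ?_, ?_, ?_⟩, ?_, rfl,
      fun _ => Iff.rfl, htrans, ?_⟩
    · refine { trichotomous := ?_, irrefl := ?_, trans := ?_ }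
      · intro P P' h1 h2
        by_contra hcon
        rcases htot P P.2 P' P'.2 with h | h
        · exact h1 ⟨hcon, h⟩
        · exact h2 ⟨Ne.symm hcon, h⟩
      · intro P h
        exact h.1 rfl
      · rintro P P' P'' ⟨h1, h2⟩ ⟨h3, h4⟩
        refine ⟨?_, SetR.trans' tri tr (hne _ P'.2) h2 h4⟩
        rintro rfl
        exact h1 (Subtype.ext (SetR.antisymm tri (hne _ P.2) (hne _ P'.2) h2 h4))
    · intro P hP
      exact ⟨Ne.symm hP, SetR.init hW irr tr _⟩
    · intro P a h
      have h1 := htrans _ _ _ h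
      have h2 : M.init ∈ M.stepSet (P : Set Q) a := by
        rw [← h1]; exact rfl
      obtain ⟨p, -, hp⟩ := h2
      exact hW.2.2.1 p a hp
    · intro u₁ a₁ v₁ u₂ a₂ v₂ h1 h2
      have e1 := htrans _ _ _ h1
      have e2 := htrans _ _ _ h2
      constructor
      · intro hlt
        refine ⟨?_, ?_⟩
        · rintro rfl
          obtain ⟨x, hx⟩ := hne _ v₁.2
          obtain ⟨p, -, hp⟩ := e1 ▸ hx
          obtain ⟨p', -, hp'⟩ := e2 ▸ hx
          exact irr x ((hW.2.2.2 _ _ _ _ _ _ hp hp').1 hlt)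
        · rw [e1, e2]
          exact SetR.step_lt hW irr tr _ _ hlt
      · rintro rfl hu
        by_cases hv : v₁ = v₂
        · exact Or.inr hv
        · refine Or.inl ⟨hv, ?_⟩
          rw [e1, e2]
          exact hu.2.step hW tri irr tr a₁
    · rw [hL]
      ext w
      constructor
      · rintro ⟨P, hP, q, hq, hacc⟩
        have := (heval w _ _).1 hP
        refine ⟨q, ?_, hacc⟩
        rw [← this] at hq
        exact hq
      · rintro ⟨q, hq, hacc⟩
        exact ⟨⟨_, hmem w ⟨q, hq⟩⟩, (heval w _ _).2 rfl, q, hq, hacc⟩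
    · intro P a h
      exact ⟨⟨_, h⟩, by simp [D, h]⟩

end Statement15

end WheelerPaper
end

section
/- Let L ⊆ Σ* be Wheeler with respect to (Σ,≺), and let β₁ ≺ β₂ ≺ … ≺ β_m be words of Pref(L), sorted co-lexicographically, that form a fingerprint of L: they are pairwise inequivalent under ≡^c_L and every ≡^c_L-class contains some β_i. Then for every γ ∈ Pref(L) and every index s < m with β_s ⪯ γ ⪯ β_{s+1}, either γ ≡^c_L β_s or γ ≡^c_L β_{s+1}. -/
/-!
Common framework: words over an ordered alphabet, co-lexicographic order,
(partial) DFAs and NFAs, Wheeler automata and Wheeler languages,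
following "Ordering regular languages: a danger zone".
-/

namespace WheelerPaper

section Helpers

theorem colexLE_iff {A : Type} [LinearOrder A] (x y : List A) :
    ColexLE x y ↔ x.reverse ≤ y.reverse := by
  rw [le_iff_lt_or_eq, List.reverse_inj]
  exact Iff.rfl

theorem head_between {A : Type} [LinearOrder A] {u v w : List A}
    (h1 : u ≤ v) (h2 : v ≤ w) (h : u.head? = w.head?) : v.head? = u.head? := by
  cases u with
  | nil =>
    cases w with
    | nil =>
      have : v = [] := le_antisymm h2 h1
      simp [this]
    | cons c w => simp at h
  | cons a u =>
    cases w with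
    | nil => simp at h
    | cons c w =>
      simp only [List.head?_cons, Option.some.injEq] at h
      subst h
      cases v with
      | nil => exact absurd h1 (not_le_of_gt List.Lex.nil)
      | cons b v =>
        have hb : b = a := by
          rcases lt_trichotomy a b with hab | hab | hab
          · exact absurd h2 (not_le_of_gt (List.Lex.rel hab))
          · exact hab.symm
          · exact absurd h1 (not_le_of_gt (List.Lex.rel hab))
        simp [hb]

/-- Classes of the refined equivalence are convex (words below). -/
theorem equivC_convex {A : Type} [LinearOrder A] {L : Set (List A)} {γ δ b : List A}
    (h : EquivC L γ δ) (hb : b ∈ Pref L)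
    (hbt : (ColexLE γ b ∧ ColexLE b δ) ∨ (ColexLE δ b ∧ ColexLE b γ)) :
    EquivC L γ b := by
  obtain ⟨hr, hl, hc⟩ := h
  refine ⟨(hc b hb hbt).symm, ?_, ?_⟩
  · simp only [colexLE_iff] at hbt
    rw [← List.head?_reverse, ← List.head?_reverse] at hl ⊢
    rcases hbt with ⟨p, q⟩ | ⟨p, q⟩
    · exact (head_between p q hl).symm
    · exact hl.trans (head_between p q hl.symm).symm
  · intro x hx hxb
    apply hc x hx
    simp only [colexLE_iff] at hbt hxb ⊢
    rcases hbt with ⟨p, q⟩ | ⟨p, q⟩ <;> rcases hxb with ⟨p', q'⟩ | ⟨p', q'⟩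
    · exact Or.inl ⟨p', q'.trans q⟩
    · exact Or.inl ⟨p.trans p', q'.trans (p.trans q)⟩
    · exact Or.inr ⟨(p.trans q).trans p', (q'.trans q)⟩
    · exact Or.inr ⟨p.trans p', q'⟩

end Helpers

section Statement18

/-- if `β₁ ≺ … ≺ β_m` is a fingerprint of a Wheeler language
`L`, then every prefix of `L` lying co-lexicographically between two
consecutive fingerprint words is `≡^c_L`-equivalent to one of them. -/
theorem statement18 {A : Type} [Fintype A] [LinearOrder A]
    (L : Set (List A)) (hW : IsWheelerLang L)
    (m : ℕ) (β : Fin m → List A)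
    (hmem : ∀ i, β i ∈ Pref L)
    (hsorted : ∀ i j : Fin m, i < j → Colex (β i) (β j))
    (hinj : ∀ i j : Fin m, EquivC L (β i) (β j) → i = j)
    (hcomplete : ∀ α ∈ Pref L, ∃ i, EquivC L α (β i)) :
    ∀ γ ∈ Pref L, ∀ (s : ℕ) (h1 : s < m) (h2 : s + 1 < m),
      ColexLE (β ⟨s, h1⟩) γ → ColexLE γ (β ⟨s + 1, h2⟩) →
      (EquivC L γ (β ⟨s, h1⟩) ∨ EquivC L γ (β ⟨s + 1, h2⟩)) := by
  intro γ hγ s h1 h2 hle1 hle2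
  obtain ⟨i, hi⟩ := hcomplete γ hγ
  have mono : ∀ i j : Fin m, i ≤ j → ColexLE (β i) (β j) := by
    intro i j hij
    rcases hij.lt_or_eq with h | h
    · exact Or.inl (hsorted i j h)
    · exact Or.inr (by rw [h])
  by_cases his : i.val ≤ s
  · left
    exact equivC_convex hi (hmem _) (Or.inr ⟨mono i ⟨s, h1⟩ his, hle1⟩)
  · right
    exact equivC_convex hi (hmem _) (Or.inl ⟨hle2, mono ⟨s + 1, h2⟩ i (by
      show s + 1 ≤ i.val
      omega)⟩)

end Statement18

end WheelerPaper
end
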